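/- arXiv:1704.02862 — 4 statements merged into one kernel-verified Lean document; each statement's English description precedes it below -/
import Mathlib

section
/- Let E be a real normed vector space, k a natural number, f : E × E → ℝ a C^k function vanishing on the diagonal, and ζ₁, …, ζ_k : E × E → E × E vector fields, each of class C^k and each tangent to the diagonal along the diagonal (the two components of ζᵢ(x,x) are equal for every x). Then the iterated Lie derivative θ(ζ_k)⋯θ(ζ₁)f, defined recursively by θ(ζ)g : p ↦ (fderiv g p)(ζ p), vanishes on the diagonal. -/
/-- The Lie derivative of a function along a vector field: `θ(ζ)g : p ↦ (fderiv g p)(ζ p)`. -/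
noncomputable def lieDerivFun {E : Type*} [NormedAddCommGroup E] [NormedSpace ℝ E]
    (ζ : E × E → E × E) (g : E × E → ℝ) : E × E → ℝ :=
  fun p => fderiv ℝ g p (ζ p)

/-- The iterated Lie derivative `θ(ζ_k)⋯θ(ζ₁)f`. -/
noncomputable def iterLieDeriv {E : Type*} [NormedAddCommGroup E] [NormedSpace ℝ E] :
    (k : ℕ) → (ζ : Fin k → (E × E → E × E)) → (f : E × E → ℝ) → (E × E → ℝ)
  | 0, _, f => f
  | (k + 1), ζ, f =>
      lieDerivFun (ζ (Fin.last k)) (iterLieDeriv k (fun i => ζ i.castSucc) f)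

open scoped Topology

section Diagonal

variable {𝕜 E F : Type*} [NontriviallyNormedField 𝕜] [NormedAddCommGroup E] [NormedSpace 𝕜 E]
  [NormedAddCommGroup F] [NormedSpace 𝕜 F]

theorem fderiv_diag_apply_diag_eq_zero {g : E × E → F} {x : E} {c : F}
    (hg : DifferentiableAt 𝕜 g (x, x)) (hc : ∀ᶠ y in 𝓝 x, g (y, y) = c) (v : E) :
    fderiv 𝕜 g (x, x) (v, v) = 0 := by
  have hasFDerivAt_diag : HasFDerivAt (fun y : E => (y, y))
      ((ContinuousLinearMap.id 𝕜 E).prod (ContinuousLinearMap.id 𝕜 E)) x :=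
    (hasFDerivAt_id x).prodMk (hasFDerivAt_id x)
  have comp_eq_zero : fderiv 𝕜 g (x, x) ∘L
      (ContinuousLinearMap.id 𝕜 E).prod (ContinuousLinearMap.id 𝕜 E) = 0 :=
    (HasFDerivAt.comp (f := fun y : E => (y, y)) x hg.hasFDerivAt hasFDerivAt_diag).unique
      ((hasFDerivAt_const c x).congr_of_eventuallyEq hc)
  exact DFunLike.congr_fun comp_eq_zero v

end Diagonal

section LieDerivative

variable {E : Type*} [NormedAddCommGroup E] [NormedSpace ℝ E]

theorem lieDerivFun_diag_eq_zero {ζ : E × E → E × E} {g : E × E → ℝ} {x : E} {c : ℝ}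
    (hg : DifferentiableAt ℝ g (x, x)) (hc : ∀ᶠ y in 𝓝 x, g (y, y) = c)
    (hζ : (ζ (x, x)).1 = (ζ (x, x)).2) : lieDerivFun ζ g (x, x) = 0 := by
  have ζ_eq : ζ (x, x) = ((ζ (x, x)).1, (ζ (x, x)).1) := Prod.ext rfl hζ.symm
  rw [lieDerivFun, ζ_eq]
  exact fderiv_diag_apply_diag_eq_zero hg hc _

theorem contDiff_lieDerivFun {n : WithTop ℕ∞} {ζ : E × E → E × E} {g : E × E → ℝ}
    (hg : ContDiff ℝ (n + 1) g) (hζ : ContDiff ℝ n ζ) : ContDiff ℝ n (lieDerivFun ζ g) :=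
  (hg.fderiv_right le_rfl).clm_apply hζ

-- `ζ i` is differentiated once along each of the `i.rev = k - 1 - i` fields applied after it.
theorem contDiff_iterLieDeriv {k : ℕ} {n : WithTop ℕ∞} {f : E × E → ℝ}
    {ζ : Fin k → E × E → E × E} (hf : ContDiff ℝ (n + k) f)
    (hζ : ∀ i, ContDiff ℝ (n + (i.rev : ℕ)) (ζ i)) : ContDiff ℝ n (iterLieDeriv k ζ f) := by
  induction k generalizing n with
  | zero => simpa [iterLieDeriv] using hf
  | succ k ih =>
    have add_succ_eq (m : ℕ) : n + 1 + m = n + (m + 1 : ℕ) := by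
      rw [Nat.cast_succ, add_assoc, add_comm 1]
    refine contDiff_lieDerivFun (ih ?_ fun i => ?_) ?_
    · rw [add_succ_eq]
      exact hf
    · rw [add_succ_eq, ← Fin.val_succ, ← Fin.rev_castSucc]
      exact hζ i.castSucc
    · simpa using hζ (Fin.last k)

theorem differentiable_iterLieDeriv {k : ℕ} {f : E × E → ℝ} {ζ : Fin k → E × E → E × E}
    (hf : ContDiff ℝ (k + 1) f) (hζ : ∀ i, ContDiff ℝ k (ζ i)) :
    Differentiable ℝ (iterLieDeriv k ζ f) := by
  have contDiff_one : ContDiff ℝ 1 (iterLieDeriv k ζ f) :=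
    contDiff_iterLieDeriv (by rwa [add_comm]) fun i => (hζ i).of_le (by norm_cast; omega)
  exact contDiff_one.differentiable one_ne_zero

theorem iterLieDeriv_vanishes_on_diagonal_general {k : ℕ} {f : E × E → ℝ}
    {ζ : Fin k → E × E → E × E} (hf0 : ∀ x, f (x, x) = 0)
    (hdiff : ∀ (j : ℕ) (hj : j < k) (x : E),
      DifferentiableAt ℝ (iterLieDeriv j (fun i => ζ (i.castLE hj.le)) f) (x, x))
    (hζdiag : ∀ i x, (ζ i (x, x)).1 = (ζ i (x, x)).2) (x : E) :
    iterLieDeriv k ζ f (x, x) = 0 := by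
  induction k generalizing x with
  | zero => exact hf0 x
  | succ k ih =>
    have previous_eq_zero (y : E) : iterLieDeriv k (fun i => ζ i.castSucc) f (y, y) = 0 :=
      ih (fun j hj => hdiff j (hj.trans k.lt_succ_self)) (fun i => hζdiag i.castSucc) y
    exact lieDerivFun_diag_eq_zero (hdiff k k.lt_succ_self x) (.of_forall previous_eq_zero)
      (hζdiag (Fin.last k) x)

end LieDerivative

theorem iterLieDeriv_vanishes_on_diagonal
    {E : Type*} [NormedAddCommGroup E] [NormedSpace ℝ E]
    (k : ℕ) (f : E × E → ℝ) (hf : ContDiff ℝ k f)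
    (hf0 : ∀ x : E, f (x, x) = 0)
    (ζ : Fin k → (E × E → E × E))
    (hζ : ∀ i, ContDiff ℝ k (ζ i))
    (hζdiag : ∀ i, ∀ x : E, ((ζ i) (x, x)).1 = ((ζ i) (x, x)).2) :
    ∀ x : E, iterLieDeriv k ζ f (x, x) = 0 := by
  exact iterLieDeriv_vanishes_on_diagonal_general hf0 (fun j hj x => differentiable_iterLieDeriv
    (hf.of_le (mod_cast hj)) (fun i => (hζ _).of_le (mod_cast hj.le)) (x, x)) hζdiag
end

section
/- Let E be a real normed vector space and let ζ, ζ' : E × E → E × E be differentiable vector fields on E × E, both tangent to the diagonal along the diagonal (for every x ∈ E, the two components of ζ(x,x) are equal, and likewise for ζ'). Then their Lie bracket [ζ,ζ'] is also tangent to the diagonal along the diagonal: for every x ∈ E, the two components of [ζ,ζ'](x,x) are equal. -/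
/-!
The diagonal is a closed linear subspace `K` of `E × E`. The tangent cone of a closed subspace at
each of its points is the subspace itself, and derivatives map tangent cones into tangent cones, so
the derivative at a point of `K` of a map preserving `K` again preserves `K`. Both terms
`DW(x) (V x)` and `DV(x) (W x)` of the bracket therefore lie in `K` as soon as `V` and `W` are
tangent to `K` along `K`.
-/

open Filter Set Topology

section TangentCone

variable {R E : Type*} [AddCommGroup E] [TopologicalSpace E]

theorem submodule_subset_tangentConeAt [DivisionRing R] [TopologicalSpace R]
    [(𝓝[≠] (0 : R)).NeBot] [Module R E] [ContinuousSMul R E] (K : Submodule R E) {x : E}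
    (hx : x ∈ K) : (K : Set E) ⊆ tangentConeAt R K x := by
  intro v hv
  have hline : ∀ t : R, x + t • v ∈ K := fun t ↦ K.add_mem hx (K.smul_mem t hv)
  exact mem_tangentConeAt_of_add_smul_mem tendsto_id (Eventually.of_forall hline)

theorem tangentConeAt_submodule_subset_closure [Ring R] [Module R E] (K : Submodule R E) {x : E}
    (hx : x ∈ K) : tangentConeAt R K x ⊆ closure K := by
  intro v hv
  obtain ⟨_, l, _, c, d, -, hxd, hcd⟩ := exists_fun_of_mem_tangentConeAt hv
  refine mem_closure_of_tendsto hcd (hxd.mono fun n hn ↦ ?_)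
  exact K.smul_mem (c n) ((K.add_mem_iff_right hx).mp hn)

end TangentCone

section Derivative

variable {𝕜 E F : Type*} [NontriviallyNormedField 𝕜]
  [NormedAddCommGroup E] [NormedSpace 𝕜 E] [NormedAddCommGroup F] [NormedSpace 𝕜 F]

theorem mapsTo_submodule_of_hasFDerivWithinAt {K : Submodule 𝕜 E} {L : Submodule 𝕜 F}
    (hL : IsClosed (L : Set F)) {f : E → F} {f' : E →L[𝕜] F} {x : E} (hx : x ∈ K)
    (hf : HasFDerivWithinAt f f' K x) (hKL : MapsTo f K L) : MapsTo f' K L := by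
  intro v hv
  have hv_cone : v ∈ tangentConeAt 𝕜 K x := submodule_subset_tangentConeAt K hx hv
  have hf'v_cone : f' v ∈ tangentConeAt 𝕜 L (f x) :=
    tangentConeAt_mono hKL.image_subset (hf.mapsTo_tangent_cone hv_cone)
  exact hL.closure_subset (tangentConeAt_submodule_subset_closure L (hKL hx) hf'v_cone)

theorem lieBracket_mem_submodule {K : Submodule 𝕜 E} (hK : IsClosed (K : Set E))
    {V W : E → E} {x : E} (hx : x ∈ K)
    (hV : DifferentiableAt 𝕜 V x) (hW : DifferentiableAt 𝕜 W x)
    (hVK : MapsTo V K K) (hWK : MapsTo W K K) : VectorField.lieBracket 𝕜 V W x ∈ K := by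
  have hDV : MapsTo (fderiv 𝕜 V x) K K :=
    mapsTo_submodule_of_hasFDerivWithinAt hK hx hV.hasFDerivAt.hasFDerivWithinAt hVK
  have hDW : MapsTo (fderiv 𝕜 W x) K K :=
    mapsTo_submodule_of_hasFDerivWithinAt hK hx hW.hasFDerivAt.hasFDerivWithinAt hWK
  exact K.sub_mem (hDW (hVK hx)) (hDV (hWK hx))

theorem lieBracket_of_diagonal_fields_is_diagonal_general {ζ ζ' : E × E → E × E} {x : E}
    (hζ : DifferentiableAt 𝕜 ζ (x, x)) (hζ' : DifferentiableAt 𝕜 ζ' (x, x))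
    (hdζ : ∀ y : E, (ζ (y, y)).1 = (ζ (y, y)).2)
    (hdζ' : ∀ y : E, (ζ' (y, y)).1 = (ζ' (y, y)).2) :
    (VectorField.lieBracket 𝕜 ζ ζ' (x, x)).1 = (VectorField.lieBracket 𝕜 ζ ζ' (x, x)).2 := by
  let diagonal : Submodule 𝕜 (E × E) := (LinearMap.fst 𝕜 E E).eqLocus (LinearMap.snd 𝕜 E E)
  have hclosed : IsClosed (diagonal : Set (E × E)) := isClosed_eq continuous_fst continuous_snd
  have hmapsTo {ξ : E × E → E × E} (hξ : ∀ y : E, (ξ (y, y)).1 = (ξ (y, y)).2) :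
      MapsTo ξ diagonal diagonal := by
    rintro ⟨y, z⟩ (hyz : y = z)
    exact hyz ▸ hξ y
  have hx : (x, x) ∈ diagonal := rfl
  exact lieBracket_mem_submodule hclosed hx hζ hζ' (hmapsTo hdζ) (hmapsTo hdζ')

end Derivative

theorem lieBracket_of_diagonal_fields_is_diagonal
    {E : Type*} [NormedAddCommGroup E] [NormedSpace ℝ E]
    (ζ ζ' : E × E → E × E)
    (hζ : Differentiable ℝ ζ) (hζ' : Differentiable ℝ ζ')
    (hdζ : ∀ x : E, (ζ (x, x)).1 = (ζ (x, x)).2)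
    (hdζ' : ∀ x : E, (ζ' (x, x)).1 = (ζ' (x, x)).2) :
    ∀ x : E, (VectorField.lieBracket ℝ ζ ζ' (x, x)).1
        = (VectorField.lieBracket ℝ ζ ζ' (x, x)).2 := fun x ↦
  lieBracket_of_diagonal_fields_is_diagonal_general (hζ (x, x)) (hζ' (x, x)) hdζ hdζ'
end

section
/- Let E be a real normed vector space, k a natural number, and let ζ, ζ̃, ζ', ζ̃' : E × E → E × E be vector fields of class C^{k+1}, each tangent to the diagonal along the diagonal (the two components of the value at every diagonal point (x,x) are equal). Suppose ζ and ζ̃ have the same k-jet at every diagonal point, i.e. iteratedFDeriv ℝ i ζ (x,x) = iteratedFDeriv ℝ i ζ̃ (x,x) for all x ∈ E and all i ≤ k, and similarly ζ' and ζ̃' have the same k-jet at every diagonal point. Then the Lie brackets [ζ,ζ'] and [ζ̃,ζ̃'] have the same k-jet at every diagonal point: iteratedFDeriv ℝ i [ζ,ζ'] (x,x) = iteratedFDeriv ℝ i [ζ̃,ζ̃'] (x,x) for all x ∈ E and all i ≤ k. -/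
/-!
The difference of the brackets is `[ζ - ζt, ζ'] - [ζ' - ζt', ζt]`, so it suffices to bracket a field
`g` whose `k`-jet vanishes along the diagonal with a field `h` tangent to the diagonal. In
`[g, h] = Dh(g) - Dg(h)` only the term `Dg(h)` could see the `(k+1)`-jet of `g`, and at a diagonal
point `p` it does so through `Dg(h p)` alone. By the symmetry of higher derivatives, the `i`-th
derivative of `Dg(h p)` is the derivative of `D^i g` in the direction `h p`. It vanishes because
`D^i g` is zero along the diagonal and `h p` is tangent to it. The argument applies to any subset of
a normed space, with directions in the tangent cone of the subset.
-/

open Filter Set VectorField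
open scoped Topology

theorem eventually_nhdsWithin_diagonal_of_forall {X : Type*} [TopologicalSpace X]
    {P : X × X → Prop} (hP : ∀ x, P (x, x)) (p : X × X) : ∀ᶠ q in 𝓝[diagonal X] p, P q :=
  eventually_mem_nhdsWithin.mono fun ⟨x, _⟩ hx ↦ by cases hx; exact hP x

section Calculus

variable {𝕜 : Type*} [NontriviallyNormedField 𝕜]
  {E : Type*} [NormedAddCommGroup E] [NormedSpace 𝕜 E]
  {F : Type*} [NormedAddCommGroup F] [NormedSpace 𝕜 F]
  {G : Type*} [NormedAddCommGroup G] [NormedSpace 𝕜 G]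
  {p : E}

theorem norm_iteratedFDeriv_clm_apply_of_contDiffAt {n : ℕ} {A : E → F →L[𝕜] G} {d : E → F}
    (hA : ContDiffAt 𝕜 n A p) (hd : ContDiffAt 𝕜 n d p) :
    ‖iteratedFDeriv 𝕜 n (fun y ↦ A y (d y)) p‖ ≤ ∑ i ∈ Finset.range (n + 1),
      n.choose i * ‖iteratedFDeriv 𝕜 i A p‖ * ‖iteratedFDeriv 𝕜 (n - i) d p‖ := by
  obtain ⟨u, hu, hpu, hAu⟩ := hA.contDiffOn' le_rfl (by simp)
  obtain ⟨w, hw, hpw, hdw⟩ := hd.contDiffOn' le_rfl (by simp)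
  simp only [insert_eq_of_mem, mem_univ, univ_inter] at hAu hdw
  have huw : IsOpen (u ∩ w) := hu.inter hw
  have hp : p ∈ u ∩ w := ⟨hpu, hpw⟩
  simpa only [iteratedFDerivWithin_of_isOpen _ huw hp] using
    norm_iteratedFDerivWithin_clm_apply (hAu.mono inter_subset_left)
      (hdw.mono inter_subset_right) huw.uniqueDiffOn hp le_rfl

theorem fderiv_apply_eq_zero_of_mem_tangentConeAt {s : Set E} {f : E → F} {v : E} (hp : p ∈ s)
    (hf : DifferentiableAt 𝕜 f p) (hfs : ∀ᶠ q in 𝓝[s] p, f q = 0)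
    (hv : v ∈ tangentConeAt 𝕜 s p) : fderiv 𝕜 f p v = 0 := by
  have hzero : HasFDerivWithinAt f (0 : E →L[𝕜] F) s p :=
    (hasFDerivWithinAt_const (0 : F) p s).congr_of_eventuallyEq hfs (hfs.self_of_nhdsWithin hp)
  exact hf.hasFDerivAt.hasFDerivWithinAt.unique_on hzero hv

theorem mem_tangentConeAt_of_mem_submodule (S : Submodule 𝕜 E) {v : E} (hp : p ∈ S) (hv : v ∈ S) :
    v ∈ tangentConeAt 𝕜 (S : Set E) p :=
  mem_tangentConeAt_of_add_smul_mem (l := 𝓝[≠] (0 : 𝕜)) (c := id)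
    tendsto_id (.of_forall fun c ↦ S.add_mem hp (S.smul_mem c hv))

theorem mem_tangentConeAt_diagonal {p v : E × E} (hp : p.1 = p.2) (hv : v.1 = v.2) :
    v ∈ tangentConeAt 𝕜 (diagonal E) p :=
  mem_tangentConeAt_of_mem_submodule
    (LinearMap.eqLocus (LinearMap.fst 𝕜 E E) (LinearMap.snd 𝕜 E E)) hp hv

theorem lieBracket_sub_lieBracket {V V₁ W W₁ : E → E}
    (hV : DifferentiableAt 𝕜 V p) (hV₁ : DifferentiableAt 𝕜 V₁ p)
    (hW : DifferentiableAt 𝕜 W p) (hW₁ : DifferentiableAt 𝕜 W₁ p) :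
    lieBracket 𝕜 V W p - lieBracket 𝕜 V₁ W₁ p =
      lieBracket 𝕜 (V - V₁) W p - lieBracket 𝕜 (W - W₁) V₁ p := by
  simp only [lieBracket, fderiv_sub hV hV₁, fderiv_sub hW hW₁, Pi.sub_apply, map_sub, sub_apply]
  abel

end Calculus

section Symmetry

variable {𝕜 : Type*} [RCLike 𝕜]
  {E : Type*} [NormedAddCommGroup E] [NormedSpace 𝕜 E]
  {F : Type*} [NormedAddCommGroup F] [NormedSpace 𝕜 F]

theorem iteratedFDeriv_fderiv_apply_const {f : E → F} (v : E) {i : ℕ} {p : E}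
    (hf : ContDiffAt 𝕜 (i + 1) f p) :
    iteratedFDeriv 𝕜 i (fun y ↦ fderiv 𝕜 f y v) p = fderiv 𝕜 (iteratedFDeriv 𝕜 i f) p v := by
  induction i generalizing p with
  | zero =>
    ext m
    simp [iteratedFDeriv_zero_eq_comp, LinearIsometryEquiv.comp_fderiv]
  | succ i ih =>
    have hD : ContDiffAt 𝕜 2 (iteratedFDeriv 𝕜 i f) p :=
      hf.iteratedFDeriv_right (by norm_cast; omega)
    have hDD : DifferentiableAt 𝕜 (fderiv 𝕜 (iteratedFDeriv 𝕜 i f)) p :=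
      (hD.fderiv_right (m := 1) (by norm_num)).differentiableAt (by simp)
    have hD_succ : DifferentiableAt 𝕜 (iteratedFDeriv 𝕜 (i + 1) f) p :=
      hf.differentiableAt_iteratedFDeriv (by norm_cast; omega)
    have hsymm : IsSymmSndFDerivAt 𝕜 (iteratedFDeriv 𝕜 i f) p :=
      hD.isSymmSndFDerivAt (by simp)
    have hih : iteratedFDeriv 𝕜 i (fun y ↦ fderiv 𝕜 f y v) =ᶠ[𝓝 p]
        fun y ↦ fderiv 𝕜 (iteratedFDeriv 𝕜 i f) y v :=
      (hf.eventually (by simp)).mono fun q hq ↦ ih (hq.of_le (by norm_cast; omega))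
    ext m
    calc iteratedFDeriv 𝕜 (i + 1) (fun y ↦ fderiv 𝕜 f y v) p m
        = fderiv 𝕜 (fderiv 𝕜 (iteratedFDeriv 𝕜 i f)) p (m 0) v (Fin.tail m) := by
          rw [iteratedFDeriv_succ_apply_left, hih.fderiv_eq,
            fderiv_clm_apply hDD (differentiableAt_const v)]
          simp
      _ = fderiv 𝕜 (fderiv 𝕜 (iteratedFDeriv 𝕜 i f)) p v (m 0) (Fin.tail m) := by
          rw [hsymm.eq]
      _ = fderiv 𝕜 (iteratedFDeriv 𝕜 (i + 1) f) p v m := by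
          rw [← fderiv_continuousMultilinear_apply_const_apply hD_succ]
          simp_rw [iteratedFDeriv_succ_apply_left]
          rw [fderiv_continuousMultilinear_apply_const_apply
              (hDD.clm_apply (differentiableAt_const (m 0))),
            fderiv_clm_apply hDD (differentiableAt_const (m 0))]
          simp

end Symmetry

/-- The map `f` vanishes to order `n` at `p`: all its derivatives of order less than `n` are zero
there. Two `C^k` maps have the same `k`-jet at `p` when their difference vanishes to order `k + 1`;
the strict inequality makes orders of vanishing additive under products. -/
def VanishesToOrder (𝕜 : Type*) [NontriviallyNormedField 𝕜]
    {E : Type*} [NormedAddCommGroup E] [NormedSpace 𝕜 E]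
    {F : Type*} [NormedAddCommGroup F] [NormedSpace 𝕜 F] (n : ℕ) (f : E → F) (p : E) : Prop :=
  ∀ i < n, iteratedFDeriv 𝕜 i f p = 0

section Vanishing

variable {𝕜 : Type*} [NontriviallyNormedField 𝕜]
  {E : Type*} [NormedAddCommGroup E] [NormedSpace 𝕜 E]
  {F : Type*} [NormedAddCommGroup F] [NormedSpace 𝕜 F]
  {G : Type*} [NormedAddCommGroup G] [NormedSpace 𝕜 G]
  {k n : ℕ} {f g : E → F} {p : E}

theorem vanishesToOrder_one : VanishesToOrder 𝕜 1 f p ↔ f p = 0 := by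
  rw [VanishesToOrder, ← norm_eq_zero, ← norm_iteratedFDeriv_zero (𝕜 := 𝕜)]
  simp only [Nat.lt_one_iff, forall_eq, norm_eq_zero]

theorem vanishesToOrder_sub_iff (hf : ContDiffAt 𝕜 k f p) (hg : ContDiffAt 𝕜 k g p) :
    VanishesToOrder 𝕜 (k + 1) (f - g) p ↔
      ∀ i ≤ k, iteratedFDeriv 𝕜 i f p = iteratedFDeriv 𝕜 i g p := by
  simp only [VanishesToOrder, Nat.lt_succ_iff]
  refine forall₂_congr fun i hi ↦ ?_
  have hik : (i : WithTop ℕ∞) ≤ k := mod_cast hi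
  rw [iteratedFDeriv_sub_apply (hf.of_le hik) (hg.of_le hik), sub_eq_zero]

theorem eventually_vanishesToOrder_sub {s : Set E} (hf : ContDiffAt 𝕜 k f p)
    (hg : ContDiffAt 𝕜 k g p)
    (hfg : ∀ᶠ q in 𝓝[s] p, ∀ i ≤ k, iteratedFDeriv 𝕜 i f q = iteratedFDeriv 𝕜 i g q) :
    ∀ᶠ q in 𝓝[s] p, VanishesToOrder 𝕜 (k + 1) (f - g) q := by
  filter_upwards [nhdsWithin_le_nhds (hf.eventually (by simp)),
    nhdsWithin_le_nhds (hg.eventually (by simp)), hfg] with q hfq hgq hq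
  exact (vanishesToOrder_sub_iff hfq hgq).2 hq

namespace VanishesToOrder

protected theorem congr (hf : VanishesToOrder 𝕜 n f p) (hfg : f =ᶠ[𝓝 p] g) :
    VanishesToOrder 𝕜 n g p :=
  fun i hi ↦ (hfg.iteratedFDeriv 𝕜 i).self_of_nhds.symm.trans (hf i hi)

protected theorem add (hf : ContDiffAt 𝕜 k f p) (hg : ContDiffAt 𝕜 k g p)
    (hf0 : VanishesToOrder 𝕜 (k + 1) f p) (hg0 : VanishesToOrder 𝕜 (k + 1) g p) :
    VanishesToOrder 𝕜 (k + 1) (f + g) p := by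
  intro i hi
  have hik : (i : WithTop ℕ∞) ≤ k := mod_cast Nat.le_of_lt_succ hi
  rw [iteratedFDeriv_add_apply (hf.of_le hik) (hg.of_le hik), hf0 i hi, hg0 i hi, add_zero]

protected theorem sub (hf : ContDiffAt 𝕜 k f p) (hg : ContDiffAt 𝕜 k g p)
    (hf0 : VanishesToOrder 𝕜 (k + 1) f p) (hg0 : VanishesToOrder 𝕜 (k + 1) g p) :
    VanishesToOrder 𝕜 (k + 1) (f - g) p :=
  (vanishesToOrder_sub_iff hf hg).2 fun i hi ↦
    (hf0 i (Nat.lt_succ_of_le hi)).trans (hg0 i (Nat.lt_succ_of_le hi)).symm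

protected theorem fderiv (hf : VanishesToOrder 𝕜 (n + 1) f p) :
    VanishesToOrder 𝕜 n (fderiv 𝕜 f) p := by
  intro i hi
  rw [← norm_eq_zero, norm_iteratedFDeriv_fderiv, hf (i + 1) (Nat.succ_lt_succ hi), norm_zero]

theorem clm_apply {a b : ℕ} {A : E → F →L[𝕜] G} {d : E → F} (hk : k < a + b)
    (hA : ContDiffAt 𝕜 k A p) (hd : ContDiffAt 𝕜 k d p)
    (hA0 : VanishesToOrder 𝕜 a A p) (hd0 : VanishesToOrder 𝕜 b d p) :
    VanishesToOrder 𝕜 (k + 1) (fun y ↦ A y (d y)) p := by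
  intro i hi
  have hik : (i : WithTop ℕ∞) ≤ k := mod_cast Nat.le_of_lt_succ hi
  rw [← norm_le_zero_iff]
  refine (norm_iteratedFDeriv_clm_apply_of_contDiffAt (hA.of_le hik) (hd.of_le hik)).trans
    (Finset.sum_eq_zero fun j hj ↦ ?_).le
  obtain hja | hjb : j < a ∨ i - j < b := by grind
  · simp [hA0 j hja]
  · simp [hd0 (i - j) hjb]

end VanishesToOrder

end Vanishing

section Tangent

variable {𝕜 : Type*} [RCLike 𝕜]
  {E : Type*} [NormedAddCommGroup E] [NormedSpace 𝕜 E]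
  {F : Type*} [NormedAddCommGroup F] [NormedSpace 𝕜 F]
  {k : ℕ} {s : Set E} {p : E}

namespace VanishesToOrder

theorem fderiv_apply_const_of_mem_tangentConeAt {g : E → F} {v : E} (hp : p ∈ s)
    (hg : ContDiffAt 𝕜 (k + 1) g p) (hgs : ∀ᶠ q in 𝓝[s] p, VanishesToOrder 𝕜 (k + 1) g q)
    (hv : v ∈ tangentConeAt 𝕜 s p) :
    VanishesToOrder 𝕜 (k + 1) (fun y ↦ fderiv 𝕜 g y v) p := by
  intro i hi
  rw [iteratedFDeriv_fderiv_apply_const v (hg.of_le (by norm_cast))]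
  have hD : DifferentiableAt 𝕜 (iteratedFDeriv 𝕜 i g) p :=
    hg.differentiableAt_iteratedFDeriv (mod_cast hi)
  exact fderiv_apply_eq_zero_of_mem_tangentConeAt hp hD (hgs.mono fun q hq ↦ hq i hi) hv

theorem fderiv_apply_of_mem_tangentConeAt {g : E → F} {h : E → E} (hp : p ∈ s)
    (hg : ContDiffAt 𝕜 (k + 1) g p) (hh : ContDiffAt 𝕜 k h p)
    (hgs : ∀ᶠ q in 𝓝[s] p, VanishesToOrder 𝕜 (k + 1) g q)
    (hhp : h p ∈ tangentConeAt 𝕜 s p) :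
    VanishesToOrder 𝕜 (k + 1) (fun y ↦ fderiv 𝕜 g y (h y)) p := by
  have hDg : ContDiffAt 𝕜 k (fderiv 𝕜 g) p := hg.fderiv_right le_rfl
  have hh_sub : ContDiffAt 𝕜 k (fun y ↦ h y - h p) p := hh.sub contDiffAt_const
  have hDg_sub : VanishesToOrder 𝕜 (k + 1) (fun y ↦ fderiv 𝕜 g y (h y - h p)) p :=
    clm_apply k.lt_succ_self hDg hh_sub (hgs.self_of_nhdsWithin hp).fderiv
      (vanishesToOrder_one.2 (sub_self _))
  have hDg_const := fderiv_apply_const_of_mem_tangentConeAt hp hg hgs hhp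
  refine VanishesToOrder.congr (.add (hDg.clm_apply hh_sub) (hDg.clm_apply contDiffAt_const)
    hDg_sub hDg_const) (.of_forall fun y ↦ ?_)
  simp

theorem lieBracket_of_mem_tangentConeAt {g h : E → E} (hp : p ∈ s) (hg : ContDiffAt 𝕜 (k + 1) g p)
    (hh : ContDiffAt 𝕜 (k + 1) h p) (hgs : ∀ᶠ q in 𝓝[s] p, VanishesToOrder 𝕜 (k + 1) g q)
    (hhp : h p ∈ tangentConeAt 𝕜 s p) :
    VanishesToOrder 𝕜 (k + 1) (lieBracket 𝕜 g h) p := by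
  have hg_k : ContDiffAt 𝕜 k g p := hg.of_le le_self_add
  have hh_k : ContDiffAt 𝕜 k h p := hh.of_le le_self_add
  have hDg : ContDiffAt 𝕜 k (fderiv 𝕜 g) p := hg.fderiv_right le_rfl
  have hDh : ContDiffAt 𝕜 k (fderiv 𝕜 h) p := hh.fderiv_right le_rfl
  have hDh_g : VanishesToOrder 𝕜 (k + 1) (fun y ↦ fderiv 𝕜 h y (g y)) p :=
    clm_apply (a := 0) (by omega) hDh hg_k (by simp [VanishesToOrder])
      (hgs.self_of_nhdsWithin hp)
  exact .sub (hDh.clm_apply hg_k) (hDg.clm_apply hh_k) hDh_g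
    (fderiv_apply_of_mem_tangentConeAt hp hg hh_k hgs hhp)

end VanishesToOrder

theorem lieBracket_diag_jet_determined_general {V V₁ W W₁ : E → E} (hp : p ∈ s)
    (hV : ContDiffAt 𝕜 (k + 1) V p) (hV₁ : ContDiffAt 𝕜 (k + 1) V₁ p)
    (hW : ContDiffAt 𝕜 (k + 1) W p) (hW₁ : ContDiffAt 𝕜 (k + 1) W₁ p)
    (hVp : V p ∈ tangentConeAt 𝕜 s p) (hWp : W p ∈ tangentConeAt 𝕜 s p)
    (hVV₁ : ∀ᶠ q in 𝓝[s] p, ∀ i ≤ k, iteratedFDeriv 𝕜 i V q = iteratedFDeriv 𝕜 i V₁ q)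
    (hWW₁ : ∀ᶠ q in 𝓝[s] p, ∀ i ≤ k, iteratedFDeriv 𝕜 i W q = iteratedFDeriv 𝕜 i W₁ q) :
    ∀ i ≤ k, iteratedFDeriv 𝕜 i (lieBracket 𝕜 V W) p =
      iteratedFDeriv 𝕜 i (lieBracket 𝕜 V₁ W₁) p := by
  have hdiff {X : E → E} (hX : ContDiffAt 𝕜 (k + 1) X p) :
      ∀ᶠ q in 𝓝 p, DifferentiableAt 𝕜 X q :=
    (hX.eventually (by simp)).mono fun q hq ↦ hq.differentiableAt (by simp)
  have hbracket : lieBracket 𝕜 (V - V₁) W - lieBracket 𝕜 (W - W₁) V₁ =ᶠ[𝓝 p]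
      lieBracket 𝕜 V W - lieBracket 𝕜 V₁ W₁ := by
    filter_upwards [hdiff hV, hdiff hV₁, hdiff hW, hdiff hW₁] with q hVq hV₁q hWq hW₁q
    exact (lieBracket_sub_lieBracket hVq hV₁q hWq hW₁q).symm
  have hV₁p : V₁ p ∈ tangentConeAt 𝕜 s p := by
    have hVV₁p : V p = V₁ p := by
      simpa using DFunLike.congr_fun (hVV₁.self_of_nhdsWithin hp 0 k.zero_le) 0
    rwa [← hVV₁p]
  rw [← vanishesToOrder_sub_iff (hV.lieBracket_vectorField hW le_rfl)
    (hV₁.lieBracket_vectorField hW₁ le_rfl)]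
  refine VanishesToOrder.congr (.sub ?_ ?_ ?_ ?_) hbracket
  · exact (hV.sub hV₁).lieBracket_vectorField hW le_rfl
  · exact (hW.sub hW₁).lieBracket_vectorField hV₁ le_rfl
  · exact .lieBracket_of_mem_tangentConeAt hp (hV.sub hV₁) hW
      (eventually_vanishesToOrder_sub (hV.of_le le_self_add) (hV₁.of_le le_self_add) hVV₁) hWp
  · exact .lieBracket_of_mem_tangentConeAt hp (hW.sub hW₁) hV₁
      (eventually_vanishesToOrder_sub (hW.of_le le_self_add) (hW₁.of_le le_self_add) hWW₁) hV₁p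

end Tangent

theorem lieBracket_diag_jet_determined
    {E : Type*} [NormedAddCommGroup E] [NormedSpace ℝ E]
    (k : ℕ) (ζ ζt ζ' ζt' : E × E → E × E)
    (hζ : ContDiff ℝ (k + 1) ζ) (hζt : ContDiff ℝ (k + 1) ζt)
    (hζ' : ContDiff ℝ (k + 1) ζ') (hζt' : ContDiff ℝ (k + 1) ζt')
    (hdζ : ∀ x : E, (ζ (x, x)).1 = (ζ (x, x)).2)
    (hdζt : ∀ x : E, (ζt (x, x)).1 = (ζt (x, x)).2)
    (hdζ' : ∀ x : E, (ζ' (x, x)).1 = (ζ' (x, x)).2)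
    (hdζt' : ∀ x : E, (ζt' (x, x)).1 = (ζt' (x, x)).2)
    (hjζ : ∀ x : E, ∀ i ≤ k, iteratedFDeriv ℝ i ζ (x, x) = iteratedFDeriv ℝ i ζt (x, x))
    (hjζ' : ∀ x : E, ∀ i ≤ k, iteratedFDeriv ℝ i ζ' (x, x) = iteratedFDeriv ℝ i ζt' (x, x)) :
    ∀ x : E, ∀ i ≤ k,
      iteratedFDeriv ℝ i (VectorField.lieBracket ℝ ζ ζ') (x, x)
        = iteratedFDeriv ℝ i (VectorField.lieBracket ℝ ζt ζt') (x, x) := by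
  exact fun x ↦ lieBracket_diag_jet_determined_general (mem_diagonal x) hζ.contDiffAt hζt.contDiffAt
    hζ'.contDiffAt hζt'.contDiffAt (mem_tangentConeAt_diagonal rfl (hdζ x))
    (mem_tangentConeAt_diagonal rfl (hdζ' x)) (eventually_nhdsWithin_diagonal_of_forall hjζ _)
    (eventually_nhdsWithin_diagonal_of_forall hjζ' _)
end

section
/- Let E and F be real normed vector spaces, f : E → F a C² map, and ξ, η : E → E differentiable vector fields. Define g : E → F by g(y) = (fderiv f y)(ξ y) and h : E → F by h(y) = (fderiv f y)(η y). If at a point x ∈ E one has fderiv g x = 0 and fderiv h x = 0 (first-order tangency of ξ and η to the level set of f at x), then (fderiv f x)([ξ,η](x)) = 0, i.e. the bracket [ξ,η] is tangent (to order zero) at x. -/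
theorem first_order_tangency_implies_bracket_tangency_general
    {𝕜 : Type*} [NontriviallyNormedField 𝕜]
    {E : Type*} [NormedAddCommGroup E] [NormedSpace 𝕜 E]
    {F : Type*} [NormedAddCommGroup F] [NormedSpace 𝕜 F]
    {n : WithTop ℕ∞} {f : E → F} {ξ η : E → E} {x : E}
    (hf : ContDiffAt 𝕜 n f x) (hn : minSmoothness 𝕜 2 ≤ n)
    (hξ : DifferentiableAt 𝕜 ξ x) (hη : DifferentiableAt 𝕜 η x)
    (hg : fderiv 𝕜 (fun y => fderiv 𝕜 f y (ξ y)) x (η x) = 0)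
    (hh : fderiv 𝕜 (fun y => fderiv 𝕜 f y (η y)) x (ξ x) = 0) :
    fderiv 𝕜 f x (VectorField.lieBracket 𝕜 ξ η x) = 0 :=
  calc
    fderiv 𝕜 f x (VectorField.lieBracket 𝕜 ξ η x)
      = fderiv 𝕜 (fun y => fderiv 𝕜 f y (η y)) x (ξ x)
          - fderiv 𝕜 (fun y => fderiv 𝕜 f y (ξ y)) x (η x) :=
        VectorField.fderiv_apply_lieBracket hf hn hη hξ
    _ = 0 := by rw [hg, hh, sub_zero]

theorem first_order_tangency_implies_bracket_tangency
    {E : Type*} [NormedAddCommGroup E] [NormedSpace ℝ E]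
    {F : Type*} [NormedAddCommGroup F] [NormedSpace ℝ F]
    (f : E → F) (hf : ContDiff ℝ 2 f)
    (ξ η : E → E) (hξ : Differentiable ℝ ξ) (hη : Differentiable ℝ η)
    (x : E)
    (hg : fderiv ℝ (fun y => fderiv ℝ f y (ξ y)) x = 0)
    (hh : fderiv ℝ (fun y => fderiv ℝ f y (η y)) x = 0) :
    fderiv ℝ f x (VectorField.lieBracket ℝ ξ η x) = 0 :=
  first_order_tangency_implies_bracket_tangency_general hf.contDiffAt
    minSmoothness_of_isRCLikeNormedField.le (hξ x) (hη x) (by simp [hg]) (by simp [hh])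
end
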